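/- arXiv:2204.00374 — 2 statements merged into one kernel-verified Lean document; each statement's English description precedes it below -/
import Mathlib

section
/- Let d_A, d_B ≥ 1, let ρ be a positive semidefinite complex matrix on ℂ^{d_A} ⊗ ℂ^{d_B} with trace 1, and let ψ ∈ ℂ^{d_A} and φ ∈ ℂ^{d_B} be unit vectors. Define F_A := ⟨ψ, (Tr_B ρ) ψ⟩, F_B := ⟨φ, (Tr_A ρ) φ⟩, and F_AB := ⟨ψ ⊗ φ, ρ (ψ ⊗ φ)⟩, where Tr_B and Tr_A denote the partial traces over the second and first tensor factor respectively. Then F_A + F_B ≤ 1 + F_AB. -/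
open Matrix BigOperators
open scoped ComplexOrder

/-- Partial trace over the second tensor factor. -/
noncomputable def ptraceB {dA dB : ℕ} (ρ : Matrix (Fin dA × Fin dB) (Fin dA × Fin dB) ℂ) :
    Matrix (Fin dA) (Fin dA) ℂ :=
  fun i i' => ∑ j, ρ (i, j) (i', j)

/-- Partial trace over the first tensor factor. -/
noncomputable def ptraceA {dA dB : ℕ} (ρ : Matrix (Fin dA × Fin dB) (Fin dA × Fin dB) ℂ) :
    Matrix (Fin dB) (Fin dB) ℂ :=
  fun j j' => ∑ i, ρ (i, j) (i, j')

/-!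
If `P = ψ ψᴴ` and `Q = φ φᴴ`, then `(1 - P) ⊗ (1 - Q)` is positive semidefinite, so its trace
against `ρ` is nonnegative. Expanding the tensor product turns this into
`tr ρ - F_A - F_B + F_AB ≥ 0`.
-/

section Algebra

open scoped Kronecker

lemma trace_mul_vecMulVec {R m n : Type*} [NonUnitalCommSemiring R] [Fintype m] [Fintype n]
    (M : Matrix m n R) (v : n → R) (w : m → R) :
    (M * vecMulVec v w).trace = w ⬝ᵥ M *ᵥ v := by
  rw [mul_vecMulVec, trace_vecMulVec, dotProduct_comm]

lemma vecMulVec_kronecker_vecMulVec {R l m n p : Type*} [CommSemigroup R]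
    (a : l → R) (b : m → R) (c : n → R) (d : p → R) :
    vecMulVec a b ⊗ₖ vecMulVec c d =
      vecMulVec (fun x : l × n => a x.1 * c x.2) (fun y : m × p => b y.1 * d y.2) := by
  ext
  exact mul_mul_mul_comm _ _ _ _

lemma one_sub_kronecker_one_sub {R m n : Type*} [Ring R] [DecidableEq m] [DecidableEq n]
    (P : Matrix m m R) (Q : Matrix n n R) :
    (1 - P) ⊗ₖ (1 - Q) = 1 - P ⊗ₖ 1 - 1 ⊗ₖ Q + P ⊗ₖ Q := by
  rw [← one_kronecker_one]
  ext
  simp only [kroneckerMap_apply, Matrix.sub_apply, Matrix.add_apply]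
  noncomm_ring

end Algebra

section LoewnerOrder

variable {𝕜 m n : Type*} [RCLike 𝕜] [Fintype m] [Fintype n]

open scoped Kronecker MatrixOrder

lemma trace_mul_nonneg_of_posSemidef {A B : Matrix n n 𝕜} (hA : A.PosSemidef)
    (hB : B.PosSemidef) : 0 ≤ (A * B).trace := by
  classical
  obtain ⟨C, rfl⟩ := CStarAlgebra.nonneg_iff_eq_star_mul_self.mp hB.nonneg
  calc 0 ≤ (C * A * Cᴴ).trace := (hA.mul_mul_conjTranspose_same C).trace_nonneg
    _ = (A * (star C * C)).trace := by
      rw [mul_assoc, trace_mul_comm, mul_assoc, star_eq_conjTranspose]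

lemma vecMulVec_self_star_le_one [DecidableEq n] {v : n → 𝕜} (hv : star v ⬝ᵥ v ≤ 1) :
    vecMulVec v (star v) ≤ 1 := by
  set P := vecMulVec v (star v) with hP
  have isHermitian_compl : (1 - P).IsHermitian :=
    isHermitian_one.sub (posSemidef_vecMulVec_self_star v).isHermitian
  have mul_self : P * P = (star v ⬝ᵥ v) • P := by
    rw [hP, vecMulVec_mul_vecMulVec, vecMulVec_smul]
  have decomposition : 1 - P = (1 - P)ᴴ * (1 - P) + (1 - star v ⬝ᵥ v) • P := by
    rw [isHermitian_compl.eq, sub_smul, one_smul, ← mul_self]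
    noncomm_ring
  rw [Matrix.le_iff, decomposition]
  exact (posSemidef_conjTranspose_mul_self _).add
    ((posSemidef_vecMulVec_self_star v).smul (sub_nonneg.mpr hv))

lemma trace_mul_kronecker_one_add_trace_mul_one_kronecker_le [DecidableEq m] [DecidableEq n]
    {ρ : Matrix (m × n) (m × n) 𝕜} (hρ : ρ.PosSemidef)
    {P : Matrix m m 𝕜} {Q : Matrix n n 𝕜} (hP : P ≤ 1) (hQ : Q ≤ 1) :
    (ρ * (P ⊗ₖ 1)).trace + (ρ * (1 ⊗ₖ Q)).trace ≤ ρ.trace + (ρ * (P ⊗ₖ Q)).trace := by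
  have trace_nonneg : 0 ≤ (ρ * ((1 - P) ⊗ₖ (1 - Q))).trace :=
    trace_mul_nonneg_of_posSemidef hρ ((Matrix.le_iff.mp hP).kronecker (Matrix.le_iff.mp hQ))
  rw [one_sub_kronecker_one_sub, mul_add, mul_sub, mul_sub, mul_one, trace_add, trace_sub,
    trace_sub] at trace_nonneg
  linear_combination trace_nonneg

end LoewnerOrder

section PartialTrace

open scoped Kronecker

variable {dA dB : ℕ} (ρ : Matrix (Fin dA × Fin dB) (Fin dA × Fin dB) ℂ)

lemma trace_mul_kronecker_one (A : Matrix (Fin dA) (Fin dA) ℂ) :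
    (ρ * (A ⊗ₖ 1)).trace = (ptraceB ρ * A).trace := by
  simp only [trace, diag_apply, mul_apply, ptraceB, kroneckerMap_apply, one_apply, mul_ite,
    mul_one, mul_zero, Fintype.sum_prod_type, Finset.sum_ite_eq', Finset.mem_univ, if_true,
    Finset.sum_mul]
  exact Finset.sum_congr rfl fun _ _ => Finset.sum_comm

lemma trace_mul_one_kronecker (B : Matrix (Fin dB) (Fin dB) ℂ) :
    (ρ * (1 ⊗ₖ B)).trace = (ptraceA ρ * B).trace := by
  simp only [trace, diag_apply, mul_apply, ptraceA, kroneckerMap_apply, one_apply, ite_mul,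
    one_mul, zero_mul, mul_ite, mul_zero, Fintype.sum_prod_type_right, Finset.sum_ite_eq',
    Finset.mem_univ, if_true, Finset.sum_mul]
  exact Finset.sum_congr rfl fun _ _ => Finset.sum_comm

end PartialTrace

theorem fidelity_tradeoff_general {dA dB : ℕ}
    {ρ : Matrix (Fin dA × Fin dB) (Fin dA × Fin dB) ℂ} (hρ : ρ.PosSemidef)
    {ψ : Fin dA → ℂ} {φ : Fin dB → ℂ} (hψ : star ψ ⬝ᵥ ψ ≤ 1) (hφ : star φ ⬝ᵥ φ ≤ 1) :
    star ψ ⬝ᵥ (ptraceB ρ).mulVec ψ + star φ ⬝ᵥ (ptraceA ρ).mulVec φ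
      ≤ ρ.trace + star (fun p : Fin dA × Fin dB => ψ p.1 * φ p.2) ⬝ᵥ
          ρ.mulVec (fun p : Fin dA × Fin dB => ψ p.1 * φ p.2) := by
  have star_tensor : star (fun p : Fin dA × Fin dB => ψ p.1 * φ p.2) =
      fun p => star ψ p.1 * star φ p.2 := funext fun _ => star_mul' _ _
  have effects_le := trace_mul_kronecker_one_add_trace_mul_one_kronecker_le hρ
    (vecMulVec_self_star_le_one hψ) (vecMulVec_self_star_le_one hφ)
  rwa [trace_mul_kronecker_one, trace_mul_one_kronecker, vecMulVec_kronecker_vecMulVec,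
    trace_mul_vecMulVec, trace_mul_vecMulVec, trace_mul_vecMulVec, ← star_tensor] at effects_le

theorem fidelity_tradeoff (dA dB : ℕ) (hdA : 1 ≤ dA) (hdB : 1 ≤ dB)
    (ρ : Matrix (Fin dA × Fin dB) (Fin dA × Fin dB) ℂ)
    (hρ : ρ.PosSemidef) (htr : ρ.trace = 1)
    (ψ : Fin dA → ℂ) (φ : Fin dB → ℂ)
    (hψ : star ψ ⬝ᵥ ψ = 1) (hφ : star φ ⬝ᵥ φ = 1) :
    (star ψ ⬝ᵥ (ptraceB ρ).mulVec ψ).re + (star φ ⬝ᵥ (ptraceA ρ).mulVec φ).re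
      ≤ 1 + (star (fun p : Fin dA × Fin dB => ψ p.1 * φ p.2) ⬝ᵥ
          ρ.mulVec (fun p : Fin dA × Fin dB => ψ p.1 * φ p.2)).re := by
  have tradeoff := fidelity_tradeoff_general hρ hψ.le hφ.le
  simpa only [htr, Complex.add_re, Complex.one_re] using (Complex.le_def.mp tradeoff).1
end

section
/- Let U be any unitary on ℂ² ⊗ ℂ² and let U^o be its reshuffled 4×4 matrix. Write P := U^o U^{o†} in 2×2 blocks with respect to the first tensor factor, P = [[A, B†], [B, C]] (so A_{m,m'} = P_{(0,m),(0,m')}, B_{m,m'} = P_{(1,m),(0,m')}, C_{m,m'} = P_{(1,m),(1,m')}). Then Tr A = 2, Tr B = 0, and C = 2·I₂ − A = (Tr A)·I₂ − A, i.e., the lower-right block is the adjugate of the upper-left block. -/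
open Matrix BigOperators
open scoped ComplexOrder

/-- The reshuffled ((π/2)-rotated) operator `U^o` of a bipartite matrix `U`,
with entries `(U^o)_{(i,j),(k,l)} = U^{ki}_{lj} = U (k,i) (l,j)`. -/
noncomputable def reshuffle {dA dB : ℕ}
    (U : Matrix (Fin dA × Fin dB) (Fin dA × Fin dB) ℂ) :
    Matrix (Fin dB × Fin dB) (Fin dA × Fin dA) ℂ :=
  fun p q => U (q.1, p.1) (q.2, p.2)

/-!
An entry of `U^o U^{o†}` sums `U^{ki}_{lj}` against the conjugate of `U^{ki'}_{lj'}` over `k` and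
`l`. Setting `j = j'` and summing over `j` completes the sum over `(l, j)` to an entry of `U U†`;
setting `i = i'` and summing over `i` completes the sum over `(k, i)` to an entry of `U† U`. The
index of the first factor still being summed contributes `d_A`, so for unitary `U` both partial
traces of `U^o U^{o†}` are `d_A • 1`. When `d_B = 2` they are `[[Tr A, Tr B†], [Tr B, Tr C]]` and
`A + C`.
-/

section PartialTrace

variable {m n R : Type*}

/-- The partial trace over the second tensor factor: the matrix of traces of the blocks of `M`,
where the first index of a pair selects the block. -/
def partialTraceRight [Fintype n] [AddCommMonoid R] (M : Matrix (m × n) (m × n) R) :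
    Matrix m m R :=
  Matrix.of fun i i' => ∑ j, M (i, j) (i', j)

/-- The partial trace over the first tensor factor: the sum of the diagonal blocks of `M`,
where the first index of a pair selects the block. -/
def partialTraceLeft [Fintype m] [AddCommMonoid R] (M : Matrix (m × n) (m × n) R) :
    Matrix n n R :=
  Matrix.of fun j j' => ∑ i, M (i, j) (i, j')

theorem partialTraceLeft_one [Fintype m] [DecidableEq m] [DecidableEq n] [NonAssocSemiring R] :
    partialTraceLeft (1 : Matrix (m × n) (m × n) R) = (Fintype.card m : R) • 1 := by
  ext j j'
  simp [partialTraceLeft, Matrix.one_apply]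

end PartialTrace

theorem adjugate_fin_two_eq_trace_smul_one_sub {R : Type*} [CommRing R]
    (A : Matrix (Fin 2) (Fin 2) R) : A.adjugate = A.trace • 1 - A := by
  ext i j
  fin_cases i <;> fin_cases j <;> simp [Matrix.adjugate_fin_two, Matrix.trace_fin_two]

section Reshuffle

variable {dA dB : ℕ} {U : Matrix (Fin dA × Fin dB) (Fin dA × Fin dB) ℂ}

theorem partialTraceRight_reshuffle_mul_conjTranspose
    (U : Matrix (Fin dA × Fin dB) (Fin dA × Fin dB) ℂ) :
    partialTraceRight (reshuffle U * (reshuffle U)ᴴ) = partialTraceLeft (U * Uᴴ) := by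
  ext i i'
  calc ∑ j, ∑ q : Fin dA × Fin dA, U (q.1, i) (q.2, j) * star (U (q.1, i') (q.2, j))
      = ∑ j, ∑ k, ∑ l, U (k, i) (l, j) * star (U (k, i') (l, j)) := by
        simp only [Fintype.sum_prod_type]
    _ = ∑ k, ∑ l, ∑ j, U (k, i) (l, j) * star (U (k, i') (l, j)) := Finset.sum_comm_cycle.symm
    _ = ∑ k, ∑ q : Fin dA × Fin dB, U (k, i) q * star (U (k, i') q) := by
        simp only [Fintype.sum_prod_type]

theorem partialTraceLeft_reshuffle_mul_conjTranspose
    (U : Matrix (Fin dA × Fin dB) (Fin dA × Fin dB) ℂ) :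
    partialTraceLeft (reshuffle U * (reshuffle U)ᴴ) = (partialTraceLeft (Uᴴ * U))ᵀ := by
  ext j j'
  calc ∑ i, ∑ q : Fin dA × Fin dA, U (q.1, i) (q.2, j) * star (U (q.1, i) (q.2, j'))
      = ∑ i, ∑ l, ∑ k, U (k, i) (l, j) * star (U (k, i) (l, j')) := by
        simp only [Fintype.sum_prod_type_right]
    _ = ∑ l, ∑ k, ∑ i, U (k, i) (l, j) * star (U (k, i) (l, j')) := Finset.sum_comm_cycle.symm
    _ = ∑ l, ∑ p : Fin dA × Fin dB, star (U p (l, j')) * U p (l, j) := by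
        simp only [Fintype.sum_prod_type, mul_comm]

theorem partialTraceRight_reshuffle_of_mem_unitaryGroup
    (hU : U ∈ Matrix.unitaryGroup (Fin dA × Fin dB) ℂ) :
    partialTraceRight (reshuffle U * (reshuffle U)ᴴ) = (dA : ℂ) • 1 := by
  rw [partialTraceRight_reshuffle_mul_conjTranspose, ← Matrix.star_eq_conjTranspose,
    Matrix.mem_unitaryGroup_iff.mp hU, partialTraceLeft_one, Fintype.card_fin]

theorem partialTraceLeft_reshuffle_of_mem_unitaryGroup
    (hU : U ∈ Matrix.unitaryGroup (Fin dA × Fin dB) ℂ) :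
    partialTraceLeft (reshuffle U * (reshuffle U)ᴴ) = (dA : ℂ) • 1 := by
  rw [partialTraceLeft_reshuffle_mul_conjTranspose, ← Matrix.star_eq_conjTranspose,
    Matrix.mem_unitaryGroup_iff'.mp hU, partialTraceLeft_one, Fintype.card_fin,
    Matrix.transpose_smul, Matrix.transpose_one]

end Reshuffle

theorem two_qubit_block_structure_general {d : ℕ}
    (U : Matrix (Fin d × Fin 2) (Fin d × Fin 2) ℂ)
    (hU : U ∈ Matrix.unitaryGroup (Fin d × Fin 2) ℂ) :
    let P : Matrix (Fin 2 × Fin 2) (Fin 2 × Fin 2) ℂ := reshuffle U * (reshuffle U)ᴴ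
    let A : Matrix (Fin 2) (Fin 2) ℂ := fun m m' => P (0, m) (0, m')
    let B : Matrix (Fin 2) (Fin 2) ℂ := fun m m' => P (1, m) (0, m')
    let C : Matrix (Fin 2) (Fin 2) ℂ := fun m m' => P (1, m) (1, m')
    A.trace = d ∧ B.trace = 0
    ∧ C = (d : ℂ) • (1 : Matrix (Fin 2) (Fin 2) ℂ) - A
    ∧ C = A.trace • (1 : Matrix (Fin 2) (Fin 2) ℂ) - A
    ∧ C = A.adjugate := by
  intro P A B C
  have trace_block (i i' : Fin 2) : ∑ j, P (i, j) (i', j) = ((d : ℂ) • 1 : Matrix _ _ ℂ) i i' :=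
    congr_fun₂ (partialTraceRight_reshuffle_of_mem_unitaryGroup hU) i i'
  have trace_A : A.trace = d := (trace_block 0 0).trans (by simp)
  have trace_B : B.trace = 0 := (trace_block 1 0).trans (by simp)
  have A_add_C : A + C = (d : ℂ) • 1 := by
    rw [← partialTraceLeft_reshuffle_of_mem_unitaryGroup hU]
    ext m m'
    exact (Fin.sum_univ_two fun i => P (i, m) (i, m')).symm
  have C_eq : C = (d : ℂ) • 1 - A := eq_sub_of_add_eq' A_add_C
  rw [adjugate_fin_two_eq_trace_smul_one_sub, trace_A]
  exact ⟨rfl, trace_B, C_eq, C_eq, C_eq⟩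

theorem two_qubit_block_structure
    (U : Matrix (Fin 2 × Fin 2) (Fin 2 × Fin 2) ℂ)
    (hU : U ∈ Matrix.unitaryGroup (Fin 2 × Fin 2) ℂ) :
    -- `P = U^o U^{o†}`, written in 2×2 blocks w.r.t. the first tensor factor
    let P : Matrix (Fin 2 × Fin 2) (Fin 2 × Fin 2) ℂ := reshuffle U * (reshuffle U)ᴴ
    let A : Matrix (Fin 2) (Fin 2) ℂ := fun m m' => P (0, m) (0, m')
    let B : Matrix (Fin 2) (Fin 2) ℂ := fun m m' => P (1, m) (0, m')
    let C : Matrix (Fin 2) (Fin 2) ℂ := fun m m' => P (1, m) (1, m')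
    A.trace = 2 ∧ B.trace = 0
    ∧ C = (2 : ℂ) • (1 : Matrix (Fin 2) (Fin 2) ℂ) - A
    ∧ C = A.trace • (1 : Matrix (Fin 2) (Fin 2) ℂ) - A
    ∧ C = A.adjugate :=
  mod_cast two_qubit_block_structure_general U hU
end
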